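/- arXiv:2306.12162 — 3 statements merged into one kernel-verified Lean document; each statement's English description precedes it below -/
import Mathlib

section
/- Let d : E → (0,∞) be a floppy graph metric with vertex set V, let xy ∈ [V]² \ E, and let r be a real number with (1/3)·ď(x,y) + (2/3)·d̂(x,y) ≤ r < d̂(x,y). Then the function D = d ∪ {⟨xy,r⟩} is a floppy graph metric. -/
open scoped Classical

universe u

namespace GraphMetricPaper

variable {X : Type u}

/-- The vertex set `V = ⋃ E` of a graph given by an adjacency relation `E`. -/
def Vtx (E : X → X → Prop) : Set X := {x | ∃ y, E x y}

/-- Two points are joined by a walk in the graph `E`. -/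
def Joined (E : X → X → Prop) (x y : X) : Prop :=
  ∃ (n : ℕ) (c : ℕ → X), c 0 = x ∧ c n = y ∧ ∀ i, i < n → E (c i) (c (i + 1))

/-- The set of weights of walks from `x` to `y`. -/
def walkSums (E : X → X → Prop) (d : X → X → ℝ) (x y : X) : Set ℝ :=
  {s | ∃ (n : ℕ) (c : ℕ → X), c 0 = x ∧ c n = y ∧ (∀ i, i < n → E (c i) (c (i + 1))) ∧
    s = ∑ i ∈ Finset.range n, d (c i) (c (i + 1))}

/-- The shortest-path pseudometric `d̂` determined by a weight function `d` on a graph `E`. -/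
noncomputable def hatd (E : X → X → Prop) (d : X → X → ℝ) (x y : X) : ℝ :=
  sInf (walkSums E d x y)

/-- The function `ď` bounding the possible extensions of `d` from below:
`ď(x,y) = sup_{ab ∈ E} max {0, d(ab) - d̂(a,x) - d̂(y,b)}`. -/
noncomputable def checkd (E : X → X → Prop) (d : X → X → ℝ) (x y : X) : ℝ :=
  sSup ({0} ∪ {r | ∃ a b, E a b ∧ r = d a b - hatd E d a x - hatd E d y b})

/-- The pseudometric `d̈` on doubletons:
`d̈(xy,uv) = min {d̂(x,u) + d̂(y,v), d̂(x,v) + d̂(y,u)}`. -/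
noncomputable def ddot (E : X → X → Prop) (d : X → X → ℝ) (x y u v : X) : ℝ :=
  min (hatd E d x u + hatd E d y v) (hatd E d x v + hatd E d y u)

/-- `d` is a graph pseudometric with edge relation `E`:  `E` is a (symmetric, irreflexive)
connected graph, `d` is a nonnegative symmetric weight on the edges, and `d = d̂` on edges. -/
structure IsGraphPseudometric (E : X → X → Prop) (d : X → X → ℝ) : Prop where
  symm : ∀ ⦃a b⦄, E a b → E b a
  irrefl : ∀ a, ¬ E a a
  wt_symm : ∀ ⦃a b⦄, E a b → d a b = d b a
  nonneg : ∀ ⦃a b⦄, E a b → 0 ≤ d a b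
  connected : ∀ x ∈ Vtx E, ∀ y ∈ Vtx E, Joined E x y
  edge_eq : ∀ ⦃a b⦄, E a b → d a b = hatd E d a b

/-- A graph metric is a graph pseudometric with strictly positive weights. -/
def IsGraphMetric (E : X → X → Prop) (d : X → X → ℝ) : Prop :=
  IsGraphPseudometric E d ∧ ∀ ⦃a b⦄, E a b → 0 < d a b

/-- A floppy graph pseudometric: `ď(x,y) < d̂(x,y)` for every `xy ∈ [V]² \ E`. -/
def FloppyPseudometric (E : X → X → Prop) (d : X → X → ℝ) : Prop :=
  IsGraphPseudometric E d ∧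
    ∀ x ∈ Vtx E, ∀ y ∈ Vtx E, x ≠ y → ¬ E x y → checkd E d x y < hatd E d x y

/-- A floppy graph metric: `ď(x,y) < d̂(x,y)` for every `xy ∈ [V]² \ E`. -/
def FloppyMetric (E : X → X → Prop) (d : X → X → ℝ) : Prop :=
  IsGraphMetric E d ∧
    ∀ x ∈ Vtx E, ∀ y ∈ Vtx E, x ≠ y → ¬ E x y → checkd E d x y < hatd E d x y

/-- The edge relation of the one-step extension `E ∪ {xy}`. -/
def extEdge (E : X → X → Prop) (x y : X) : X → X → Prop :=
  fun a b => E a b ∨ (a = x ∧ b = y) ∨ (a = y ∧ b = x)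

/-- The weight function of the one-step extension `d ∪ {⟨xy, r⟩}`. -/
noncomputable def extWt (d : X → X → ℝ) (x y : X) (r : ℝ) : X → X → ℝ :=
  fun a b => if (a = x ∧ b = y) ∨ (a = y ∧ b = x) then r else d a b

/-- The set `[V]² \ E` of unordered pairs of distinct vertices that are not edges. -/
def nonEdgePairs (E : X → X → Prop) : Set (Sym2 X) :=
  {e | ∃ a b : X, e = s(a, b) ∧ a ≠ b ∧ a ∈ Vtx E ∧ b ∈ Vtx E ∧ ¬ E a b}

/-- A set of (unordered) weighted pairs, presented as a relation `R`, is a full metric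
on `V`: it is symmetric, its domain is exactly `[V]²`, it is single-valued, positive,
and satisfies the triangle inequality. -/
def IsFullMetricRel (V : Set X) (R : X → X → ℝ → Prop) : Prop :=
  (∀ a b r, R a b r → R b a r) ∧
  (∀ a b r, R a b r → a ∈ V ∧ b ∈ V ∧ a ≠ b) ∧
  (∀ a b, a ∈ V → b ∈ V → a ≠ b → ∃ r, R a b r) ∧
  (∀ a b r s, R a b r → R a b s → r = s) ∧
  (∀ a b r, R a b r → 0 < r) ∧
  (∀ a b c r s t, R a b r → R b c s → R a c t → t ≤ r + s)

/-- A weight function `D` on `[V]²` is a full metric on `V`. -/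
def IsFullMetricOn (V : Set X) (D : X → X → ℝ) : Prop :=
  (∀ a b, a ∈ V → b ∈ V → a ≠ b → D a b = D b a) ∧
  (∀ a b, a ∈ V → b ∈ V → a ≠ b → 0 < D a b) ∧
  (∀ a b c, a ∈ V → b ∈ V → c ∈ V → a ≠ b → b ≠ c → a ≠ c → D a c ≤ D a b + D b c)

/-- Player I has a winning strategy in the metric-extending game `Game_d(lam, Fam)`:
there are functions `S1, S2` choosing, for each inning `β < lam` and each sequence of
previous answers of player II, a legal doubleton in `[V]²` and a set from `Fam`, such that
for every play of player II respecting the strategy, the resulting relation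
`d ∪ {⟨x_α y_α, r_α⟩ : α < lam}` is a full metric on `V`. -/
def WinningStratI (V : Set X) (E : X → X → Prop) (d : X → X → ℝ)
    (lam : Ordinal.{u}) (Fam : Set (Set ℝ)) : Prop :=
  ∃ (S1 : ∀ β : Ordinal.{u}, β < lam → (∀ α : Ordinal.{u}, α < β → ℝ) → X × X)
    (S2 : ∀ β : Ordinal.{u}, β < lam → (∀ α : Ordinal.{u}, α < β → ℝ) → Set ℝ),
    (∀ β hβ s, S2 β hβ s ∈ Fam) ∧
    (∀ β hβ s, (S1 β hβ s).1 ∈ V ∧ (S1 β hβ s).2 ∈ V ∧ (S1 β hβ s).1 ≠ (S1 β hβ s).2) ∧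
    (∀ s : ∀ α : Ordinal.{u}, α < lam → ℝ,
      (∀ α (hα : α < lam), s α hα ∈ S2 α hα (fun γ hγ => s γ (hγ.trans hα))) →
      IsFullMetricRel V (fun a b r =>
        (E a b ∧ r = d a b) ∨
        ∃ α, ∃ hα : α < lam,
          ((a = (S1 α hα (fun γ hγ => s γ (hγ.trans hα))).1 ∧
            b = (S1 α hα (fun γ hγ => s γ (hγ.trans hα))).2) ∨
           (a = (S1 α hα (fun γ hγ => s γ (hγ.trans hα))).2 ∧
            b = (S1 α hα (fun γ hγ => s γ (hγ.trans hα))).1)) ∧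
          r = s α hα))

/-- Player II has a winning strategy in the metric-extending game `Game_d(lam, Fam)`:
there is a function `T` assigning to each inning `β < lam` and each sequence of moves of
player I (of length `β + 1`) an answer in the set component of the last move, such that
for every legal play of player I, the resulting relation is not a full metric on `V`. -/
def WinningStratII (V : Set X) (E : X → X → Prop) (d : X → X → ℝ)
    (lam : Ordinal.{u}) (Fam : Set (Set ℝ)) : Prop :=
  ∃ T : ∀ β : Ordinal.{u}, β < lam → (∀ α : Ordinal.{u}, α ≤ β → (X × X) × Set ℝ) → ℝ,
    (∀ β hβ p, (p β le_rfl).2 ∈ Fam → T β hβ p ∈ (p β le_rfl).2) ∧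
    (∀ p : ∀ α : Ordinal.{u}, α < lam → (X × X) × Set ℝ,
      (∀ α hα, (p α hα).1.1 ∈ V ∧ (p α hα).1.2 ∈ V ∧ (p α hα).1.1 ≠ (p α hα).1.2 ∧
        (p α hα).2 ∈ Fam) →
      ¬ IsFullMetricRel V (fun a b r =>
        (E a b ∧ r = d a b) ∨
        ∃ α, ∃ hα : α < lam,
          ((a = (p α hα).1.1 ∧ b = (p α hα).1.2) ∨
           (a = (p α hα).1.2 ∧ b = (p α hα).1.1)) ∧
          r = T α hα (fun γ hγ => p γ (lt_of_le_of_lt hγ hα))))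

/-- The edge relation of the glued graph `E_d = E_p ∪ ⋃_{f ∈ F} E_f`. -/
def gluedEdge (Ep : X → X → Prop) (F : Set ((X → X → Prop) × (X → X → ℝ))) :
    X → X → Prop :=
  fun a b => Ep a b ∨ ∃ f ∈ F, f.1 a b

/-- `Λ(v; B) = inf {d̂(a,v) + d̂(v,b) - d̂(a,b) : a, b ∈ B}`. -/
noncomputable def Lam (E : X → X → Prop) (d : X → X → ℝ) (v : X) (B : Set X) : ℝ :=
  sInf {r | ∃ a ∈ B, ∃ b ∈ B, r = hatd E d a v + hatd E d v b - hatd E d a b}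

/-- The gluing setup: a graph pseudometric `p = (Ep, wp)` and a family `F` of graph
pseudometrics such that each member meets `V_p`, agrees with `p̂` on the intersection of
the vertex sets, and distinct members only meet inside `V_p`; `wd` is the glued weight
function `d = p ∪ ⋃ F` on `E_d = E_p ∪ ⋃_{f ∈ F} E_f`. -/
structure GluingSetup (Ep : X → X → Prop) (wp : X → X → ℝ)
    (F : Set ((X → X → Prop) × (X → X → ℝ))) (wd : X → X → ℝ) : Prop where
  hp : IsGraphPseudometric Ep wp
  hF : ∀ f ∈ F, IsGraphPseudometric f.1 f.2
  meet : ∀ f ∈ F, (Vtx f.1 ∩ Vtx Ep).Nonempty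
  agree : ∀ f ∈ F, ∀ x ∈ Vtx f.1 ∩ Vtx Ep, ∀ y ∈ Vtx f.1 ∩ Vtx Ep, x ≠ y →
    hatd f.1 f.2 x y = hatd Ep wp x y
  inter_sub : ∀ f ∈ F, ∀ g ∈ F, f ≠ g → Vtx f.1 ∩ Vtx g.1 ⊆ Vtx Ep
  wd_p : ∀ ⦃a b⦄, Ep a b → wd a b = wp a b
  wd_F : ∀ f ∈ F, ∀ ⦃a b⦄, f.1 a b → wd a b = f.2 a b

/-!
As `ď(x,y) < d̂(x,y)`, the bounds on `r` give `ď(x,y) < r < d̂(x,y)`. For distinct `u` and `v`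
with `uv ∉ E ∪ {xy}`, compare an edge `ab` of `E ∪ {xy}` with a walk in `E ∪ {xy}` that goes
from `a` to `u`, then to `v`, then to `b`.

* A walk that avoids `xy` is a walk in `E`. If `ab ∈ E`, its weight exceeds `d(ab)` by at least
  `d̂(u,v) - ď(u,v)`, as `d` is floppy; if `ab = xy`, its weight is at least `d̂(x,y) > r`.
* From a walk that uses `xy`, cutting out loops leaves either a walk that uses `xy` just once, or
  a walk in `E` whose weight has dropped by at least `2r`. So if `ab ∈ E`, the original weight
  exceeds `d(ab)` by at least `r - ď(x,y)` in the first case and by at least `2r` in the second.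
  If `ab = xy`, then either the part from `u` to `v` uses `xy` and has weight greater than `r`,
  because `uv ≠ xy`, or another part has weight at least `r` and the part from `u` to `v` has
  positive weight.

In each case the excess is bounded away from `0` independently of `ab`.
-/

section Walks

variable {E : X → X → Prop} {d : X → X → ℝ} {u v w a b : X}

lemma Joined.refl (E : X → X → Prop) (u : X) : Joined E u u :=
  ⟨0, fun _ => u, rfl, rfl, by simp⟩

lemma Joined.mono {E' : X → X → Prop} (hEE' : ∀ ⦃a b⦄, E a b → E' a b) (huv : Joined E u v) :
    Joined E' u v := by
  obtain ⟨n, c, h0, hn, hc⟩ := huv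
  exact ⟨n, c, h0, hn, fun i hi => hEE' (hc i hi)⟩

lemma walkSums_nonneg (hd : ∀ ⦃a b⦄, E a b → 0 ≤ d a b) {s : ℝ} (hs : s ∈ walkSums E d u v) :
    0 ≤ s := by
  obtain ⟨n, c, -, -, hc, rfl⟩ := hs
  exact Finset.sum_nonneg fun i hi => hd (hc i (Finset.mem_range.mp hi))

lemma bddBelow_walkSums (hd : ∀ ⦃a b⦄, E a b → 0 ≤ d a b) (u v : X) :
    BddBelow (walkSums E d u v) :=
  ⟨0, fun _ => walkSums_nonneg hd⟩

lemma walkSums_subset_swap (hE : ∀ ⦃a b⦄, E a b → E b a)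
    (hd : ∀ ⦃a b⦄, E a b → d a b = d b a) (u v : X) :
    walkSums E d u v ⊆ walkSums E d v u := by
  rintro _ ⟨n, c, rfl, rfl, hc, rfl⟩
  have reverse_index {i : ℕ} (hi : i < n) : n - i = n - (i + 1) + 1 := by omega
  refine ⟨n, fun i => c (n - i), by simp, by simp, fun i hi => ?_, ?_⟩
  · beta_reduce
    rw [reverse_index hi]
    exact hE (hc _ (by omega))
  · rw [← Finset.sum_range_reflect]
    refine Finset.sum_congr rfl fun i hi => ?_
    rw [Finset.mem_range] at hi
    beta_reduce
    rw [reverse_index hi, Nat.sub_sub, Nat.add_comm 1 i]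
    exact hd (hc _ (by omega))

lemma hatd_comm (hE : ∀ ⦃a b⦄, E a b → E b a) (hd : ∀ ⦃a b⦄, E a b → d a b = d b a) (u v : X) :
    hatd E d u v = hatd E d v u :=
  congrArg sInf ((walkSums_subset_swap hE hd u v).antisymm (walkSums_subset_swap hE hd v u))

lemma hatd_nonneg (hd : ∀ ⦃a b⦄, E a b → 0 ≤ d a b) (u v : X) : 0 ≤ hatd E d u v :=
  Real.sInf_nonneg fun _ => walkSums_nonneg hd

lemma hatd_self (hd : ∀ ⦃a b⦄, E a b → 0 ≤ d a b) (u : X) : hatd E d u u = 0 :=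
  (csInf_le (bddBelow_walkSums hd u u) ⟨0, fun _ => u, by simp⟩).antisymm (hatd_nonneg hd u u)

lemma hatd_le_add_hatd_of_edge (hd : ∀ ⦃a b⦄, E a b → 0 ≤ d a b) (hab : E a b)
    (hbv : Joined E b v) : hatd E d a v ≤ d a b + hatd E d b v := by
  obtain ⟨n, c, h0, hn, hc⟩ := hbv
  rw [← sub_le_iff_le_add']
  refine le_csInf ⟨_, n, c, h0, hn, hc, rfl⟩ ?_
  rintro _ ⟨n, c, rfl, rfl, hc, rfl⟩
  rw [sub_le_iff_le_add']
  refine csInf_le (bddBelow_walkSums hd _ _)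
    ⟨n + 1, fun i => Nat.casesOn i a c, rfl, rfl, ?_, ?_⟩
  · rintro (_ | i) hi
    exacts [hab, hc i (Nat.lt_of_succ_lt_succ hi)]
  · rw [Finset.sum_range_succ', add_comm]
    rfl

lemma hatd_le_of_edge (hd : ∀ ⦃a b⦄, E a b → 0 ≤ d a b) (hab : E a b) :
    hatd E d a b ≤ d a b := by
  simpa only [hatd_self hd, add_zero] using hatd_le_add_hatd_of_edge hd hab (Joined.refl E b)

lemma le_add_sum_of_edge_le {g : X → ℝ} (hg : ∀ ⦃a b⦄, E a b → g b ≤ g a + d a b) {n : ℕ}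
    {c : ℕ → X} (hc : ∀ i, i < n → E (c i) (c (i + 1))) :
    g (c n) ≤ g (c 0) + ∑ i ∈ Finset.range n, d (c i) (c (i + 1)) := by
  induction n with
  | zero => simp
  | succ n ih =>
    rw [Finset.sum_range_succ, ← add_assoc]
    exact (hg (hc n n.lt_succ_self)).trans
      (add_le_add_left (ih fun i hi => hc i (hi.trans n.lt_succ_self)) _)

lemma le_add_hatd_of_edge_le {g : X → ℝ} (hg : ∀ ⦃a b⦄, E a b → g b ≤ g a + d a b)
    (huv : Joined E u v) : g v ≤ g u + hatd E d u v := by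
  obtain ⟨n, c, h0, hn, hc⟩ := huv
  rw [← sub_le_iff_le_add']
  refine le_csInf ⟨_, n, c, h0, hn, hc, rfl⟩ ?_
  rintro _ ⟨n, c, rfl, rfl, hc, rfl⟩
  rw [sub_le_iff_le_add']
  exact le_add_sum_of_edge_le hg hc

lemma checkd_lt_hatd_of_edge_add_le {ε : ℝ} (hpos : 0 < hatd E d u v) (hε : 0 < ε)
    (hE : ∀ ⦃a b⦄, E a b → d a b + ε ≤ hatd E d a u + hatd E d u v + hatd E d v b) :
    checkd E d u v < hatd E d u v := by
  have bound : checkd E d u v ≤ max 0 (hatd E d u v - ε) := by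
    refine csSup_le ⟨0, Or.inl rfl⟩ ?_
    rintro _ (rfl | ⟨a, b, hab, rfl⟩)
    · exact le_max_left _ _
    · exact le_max_of_le_right (by linarith [hE hab])
  exact bound.trans_lt (max_lt hpos (sub_lt_self _ hε))

end Walks

namespace IsGraphPseudometric

variable {E : X → X → Prop} {d : X → X → ℝ} {x y u v w a b : X}

lemma mem_vtx (h : IsGraphPseudometric E d) (hab : E a b) : a ∈ Vtx E ∧ b ∈ Vtx E :=
  ⟨⟨b, hab⟩, ⟨a, h.symm hab⟩⟩

lemma hatd_comm (h : IsGraphPseudometric E d) (u v : X) : hatd E d u v = hatd E d v u :=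
  GraphMetricPaper.hatd_comm h.symm h.wt_symm u v

lemma hatd_triangle (h : IsGraphPseudometric E d) (hu : u ∈ Vtx E) (hv : v ∈ Vtx E)
    (hw : w ∈ Vtx E) : hatd E d u w ≤ hatd E d u v + hatd E d v w := by
  refine le_add_hatd_of_edge_le (fun a b hab => ?_) (h.connected v hv w hw)
  rw [h.hatd_comm u a, h.hatd_comm u b, h.wt_symm hab, add_comm]
  exact hatd_le_add_hatd_of_edge h.nonneg (h.symm hab) (h.connected a (h.mem_vtx hab).1 u hu)

lemma bddAbove_checkd (h : IsGraphPseudometric E d) (hx : x ∈ Vtx E) (hy : y ∈ Vtx E) :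
    BddAbove ({0} ∪ {r | ∃ a b, E a b ∧ r = d a b - hatd E d a x - hatd E d y b}) := by
  refine ⟨hatd E d x y, ?_⟩
  rintro _ (rfl | ⟨a, b, hab, rfl⟩)
  · exact hatd_nonneg h.nonneg x y
  · obtain ⟨ha, hb⟩ := h.mem_vtx hab
    rw [h.edge_eq hab]
    linarith [h.hatd_triangle ha hx hb, h.hatd_triangle hx hy hb]

lemma checkd_nonneg (h : IsGraphPseudometric E d) (hx : x ∈ Vtx E) (hy : y ∈ Vtx E) :
    0 ≤ checkd E d x y :=
  le_csSup (h.bddAbove_checkd hx hy) (Or.inl rfl)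

lemma edge_le_hatd_add_checkd_add_hatd (h : IsGraphPseudometric E d) (hx : x ∈ Vtx E)
    (hy : y ∈ Vtx E) (hab : E a b) : d a b ≤ hatd E d a x + checkd E d x y + hatd E d y b := by
  have le_sup : d a b - hatd E d a x - hatd E d y b ≤ checkd E d x y :=
    le_csSup (h.bddAbove_checkd hx hy) (Or.inr ⟨a, b, hab, rfl⟩)
  linarith

lemma not_edge_of_checkd_lt_hatd (h : IsGraphPseudometric E d)
    (hlt : checkd E d x y < hatd E d x y) : ¬ E x y := by
  intro hxy
  obtain ⟨hx, hy⟩ := h.mem_vtx hxy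
  have le_checkd := h.edge_le_hatd_add_checkd_add_hatd hx hy hxy
  rw [hatd_self h.nonneg, hatd_self h.nonneg, zero_add, add_zero, h.edge_eq hxy] at le_checkd
  exact hlt.not_ge le_checkd

end IsGraphPseudometric

namespace FloppyMetric

variable {E : X → X → Prop} {d : X → X → ℝ} {u v p q : X}

lemma hatd_pos (hd : FloppyMetric E d) (hu : u ∈ Vtx E) (hv : v ∈ Vtx E) (huv : u ≠ v) :
    0 < hatd E d u v := by
  by_cases hE : E u v
  · rw [← hd.1.1.edge_eq hE]
    exact hd.1.2 hE
  · exact (hd.1.1.checkd_nonneg hu hv).trans_lt (hd.2 u hu v hv huv hE)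

lemma hatd_add_hatd_pos (hd : FloppyMetric E d) (hu : u ∈ Vtx E) (hp : p ∈ Vtx E)
    (hq : q ∈ Vtx E) (hv : v ∈ Vtx E) (hne : ¬ (u = p ∧ v = q)) :
    0 < hatd E d u p + hatd E d q v := by
  have nonneg := hatd_nonneg hd.1.1.nonneg
  by_cases hup : u = p
  · exact add_pos_of_nonneg_of_pos (nonneg u p) (hd.hatd_pos hq hv fun hqv => hne ⟨hup, hqv.symm⟩)
  · exact add_pos_of_pos_of_nonneg (hd.hatd_pos hu hp hup) (nonneg q v)

end FloppyMetric

section Extension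

variable {E : X → X → Prop} {d : X → X → ℝ} {x y u v w a b : X} {r : ℝ}

/-- The shortest-path pseudometric `D̂` of the one-step extension `D = d ∪ {⟨xy, r⟩}`. -/
noncomputable abbrev extHatd (E : X → X → Prop) (d : X → X → ℝ) (x y : X) (r : ℝ) :
    X → X → ℝ :=
  hatd (extEdge E x y) (extWt d x y r)

/-- The distance from `u` to `v` by way of the new edge `xy` of weight `r`: a lower bound for the
weights of the walks in `E ∪ {xy}` that use `xy`. The first two terms account for the walks that
cross `xy` once, the last one for those that cross it back and forth. -/
noncomputable def hatdVia (E : X → X → Prop) (d : X → X → ℝ) (x y : X) (r : ℝ) (u v : X) : ℝ :=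
  min (min (hatd E d u x + r + hatd E d y v) (hatd E d u y + r + hatd E d x v))
    (hatd E d u v + 2 * r)

lemma vtx_extEdge (hx : x ∈ Vtx E) (hy : y ∈ Vtx E) : Vtx (extEdge E x y) = Vtx E := by
  ext a
  constructor
  · rintro ⟨b, hab | ⟨rfl, -⟩ | ⟨rfl, -⟩⟩
    exacts [⟨b, hab⟩, hx, hy]
  · rintro ⟨b, hab⟩
    exact ⟨b, Or.inl hab⟩

lemma extEdge_symm (hE : ∀ ⦃a b⦄, E a b → E b a) ⦃a b : X⦄ (hab : extEdge E x y a b) :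
    extEdge E x y b a :=
  hab.imp (fun h => hE h) fun h => h.symm.imp And.symm And.symm

lemma extWt_of_edge (h : IsGraphPseudometric E d) (hnE : ¬ E x y) (hab : E a b) :
    extWt d x y r a b = d a b := by
  refine if_neg ?_
  rintro (⟨rfl, rfl⟩ | ⟨rfl, rfl⟩)
  exacts [hnE hab, hnE (h.symm hab)]

lemma extWt_of_new_edge (hab : (a = x ∧ b = y) ∨ (a = y ∧ b = x)) : extWt d x y r a b = r :=
  if_pos hab

lemma extWt_symm (h : IsGraphPseudometric E d) (hnE : ¬ E x y) ⦃a b : X⦄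
    (hab : extEdge E x y a b) : extWt d x y r a b = extWt d x y r b a := by
  rcases hab with hab | hab
  · rw [extWt_of_edge h hnE hab, extWt_of_edge h hnE (h.symm hab), h.wt_symm hab]
  · rw [extWt_of_new_edge hab, extWt_of_new_edge (hab.symm.imp And.symm And.symm)]

lemma extWt_nonneg (h : IsGraphPseudometric E d) (hnE : ¬ E x y) (hr : 0 ≤ r) ⦃a b : X⦄
    (hab : extEdge E x y a b) : 0 ≤ extWt d x y r a b := by
  rcases hab with hab | hab
  · exact (h.nonneg hab).trans_eq (extWt_of_edge h hnE hab).symm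
  · exact hr.trans_eq (extWt_of_new_edge hab).symm

lemma extWt_pos (hd : IsGraphMetric E d) (hnE : ¬ E x y) (hr : 0 < r) (hab : extEdge E x y a b) :
    0 < extWt d x y r a b := by
  rcases hab with hab | hab
  · exact (hd.2 hab).trans_eq (extWt_of_edge hd.1 hnE hab).symm
  · exact hr.trans_eq (extWt_of_new_edge hab).symm

lemma joined_extEdge (h : IsGraphPseudometric E d) (hu : u ∈ Vtx E) (hv : v ∈ Vtx E) :
    Joined (extEdge E x y) u v :=
  (h.connected u hu v hv).mono fun _ _ => Or.inl

lemma extHatd_comm (h : IsGraphPseudometric E d) (hnE : ¬ E x y) (u v : X) :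
    extHatd E d x y r u v = extHatd E d x y r v u :=
  hatd_comm (extEdge_symm h.symm) (extWt_symm h hnE) u v

lemma extHatd_nonneg (h : IsGraphPseudometric E d) (hnE : ¬ E x y) (hr : 0 ≤ r) (u v : X) :
    0 ≤ extHatd E d x y r u v :=
  hatd_nonneg (extWt_nonneg h hnE hr) u v

lemma hatdVia_swap (E : X → X → Prop) (d : X → X → ℝ) (x y : X) (r : ℝ) (u v : X) :
    hatdVia E d y x r u v = hatdVia E d x y r u v :=
  congrArg (min · _) (min_comm _ _)

lemma hatdVia_comm (h : IsGraphPseudometric E d) (u v : X) :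
    hatdVia E d x y r u v = hatdVia E d x y r v u := by
  have reverse (p q : X) : hatd E d u p + r + hatd E d q v = hatd E d v q + r + hatd E d p u := by
    rw [h.hatd_comm u p, h.hatd_comm q v]
    ring
  rw [← hatdVia_swap, hatdVia, hatdVia, reverse y x, reverse x y, h.hatd_comm u v]

lemma le_hatdVia (hd : ∀ ⦃a b⦄, E a b → 0 ≤ d a b) (hr : 0 ≤ r) (u v : X) :
    r ≤ hatdVia E d x y r u v := by
  have nonneg := hatd_nonneg hd
  refine le_min (le_min ?_ ?_) ?_
  · linarith [nonneg u x, nonneg y v]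
  · linarith [nonneg u y, nonneg x v]
  · linarith [nonneg u v]

lemma FloppyMetric.lt_hatdVia (hd : FloppyMetric E d) (hx : x ∈ Vtx E) (hy : y ∈ Vtx E)
    (hr : 0 < r) (hu : u ∈ Vtx E) (hv : v ∈ Vtx E)
    (hne : ¬ ((u = x ∧ v = y) ∨ (u = y ∧ v = x))) : r < hatdVia E d x y r u v := by
  obtain ⟨hne₁, hne₂⟩ := not_or.mp hne
  refine lt_min (lt_min ?_ ?_) ?_
  · linarith [hd.hatd_add_hatd_pos hu hx hy hv hne₁]
  · linarith [hd.hatd_add_hatd_pos hu hy hx hv hne₂]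
  · linarith [hatd_nonneg hd.1.1.nonneg u v]

lemma edge_add_le_hatdVia (h : IsGraphPseudometric E d) (hx : x ∈ Vtx E) (hy : y ∈ Vtx E)
    (hr : 0 ≤ r) (hab : E a b) : d a b + (r - checkd E d x y) ≤ hatdVia E d x y r a b := by
  refine le_min (le_min ?_ ?_) ?_
  · linarith [h.edge_le_hatd_add_checkd_add_hatd hx hy hab]
  · linarith [h.edge_le_hatd_add_checkd_add_hatd hx hy (h.symm hab), h.wt_symm hab,
      h.hatd_comm a y, h.hatd_comm x b]
  · linarith [h.edge_eq hab, h.checkd_nonneg hx hy]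

lemma hatdVia_le_add_hatd (h : IsGraphPseudometric E d) (hx : x ∈ Vtx E) (hy : y ∈ Vtx E)
    (hu : u ∈ Vtx E) (hv : v ∈ Vtx E) (hw : w ∈ Vtx E) :
    hatdVia E d x y r u w ≤ hatdVia E d x y r u v + hatd E d v w := by
  simp only [hatdVia, ← min_add_add_right]
  refine min_le_min (min_le_min ?_ ?_) ?_
  · linarith [h.hatd_triangle hy hv hw]
  · linarith [h.hatd_triangle hx hv hw]
  · linarith [h.hatd_triangle hu hv hw]

lemma hatdVia_right_le_hatd_add (hd : ∀ ⦃a b⦄, E a b → 0 ≤ d a b) (u : X) :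
    hatdVia E d x y r u y ≤ hatd E d u x + r := by
  refine (min_le_left _ _).trans ((min_le_left _ _).trans_eq ?_)
  rw [hatd_self hd, add_zero]

lemma hatdVia_right_le_hatdVia_left_add (hd : ∀ ⦃a b⦄, E a b → 0 ≤ d a b) (hr : 0 ≤ r) (u : X) :
    hatdVia E d x y r u y ≤ hatdVia E d x y r u x + r := by
  have once : hatdVia E d x y r u y ≤ hatd E d u x + r := hatdVia_right_le_hatd_add hd u
  have back_and_forth : hatdVia E d x y r u y ≤ hatd E d u y + 2 * r := min_le_right _ _
  rw [← sub_le_iff_le_add]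
  refine le_min (le_min ?_ ?_) ?_
  · linarith [hatd_nonneg hd y x]
  · linarith [hatd_self hd x]
  · linarith

lemma hatdVia_le_hatd_add_of_new_edge (hd : ∀ ⦃a b⦄, E a b → 0 ≤ d a b)
    (hab : (a = x ∧ b = y) ∨ (a = y ∧ b = x)) (u : X) :
    hatdVia E d x y r u b ≤ hatd E d u a + r := by
  rcases hab with ⟨rfl, rfl⟩ | ⟨rfl, rfl⟩
  · exact hatdVia_right_le_hatd_add hd u
  · rw [← hatdVia_swap]
    exact hatdVia_right_le_hatd_add hd u

lemma hatdVia_le_add_extWt (h : IsGraphPseudometric E d) (hx : x ∈ Vtx E) (hy : y ∈ Vtx E)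
    (hnE : ¬ E x y) (hr : 0 ≤ r) (hu : u ∈ Vtx E) (hab : extEdge E x y a b) :
    hatdVia E d x y r u b ≤ hatdVia E d x y r u a + extWt d x y r a b := by
  rcases hab with hab | hab
  · obtain ⟨ha, hb⟩ := h.mem_vtx hab
    rw [extWt_of_edge h hnE hab, h.edge_eq hab]
    exact hatdVia_le_add_hatd h hx hy hu ha hb
  · rw [extWt_of_new_edge hab]
    rcases hab with ⟨rfl, rfl⟩ | ⟨rfl, rfl⟩
    · exact hatdVia_right_le_hatdVia_left_add h.nonneg hr u
    · rw [← hatdVia_swap E d b a r u b, ← hatdVia_swap E d b a r u a]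
      exact hatdVia_right_le_hatdVia_left_add h.nonneg hr u

lemma hatdVia_le_hatdVia_add_extHatd (h : IsGraphPseudometric E d) (hx : x ∈ Vtx E)
    (hy : y ∈ Vtx E) (hnE : ¬ E x y) (hr : 0 ≤ r) (hu : u ∈ Vtx E) (hv : v ∈ Vtx E)
    (hw : w ∈ Vtx E) :
    hatdVia E d x y r u w ≤ hatdVia E d x y r u v + extHatd E d x y r v w :=
  le_add_hatd_of_edge_le (fun _ _ => hatdVia_le_add_extWt h hx hy hnE hr hu)
    (joined_extEdge h hv hw)

lemma hatdVia_le_extHatd_add_hatdVia (h : IsGraphPseudometric E d) (hx : x ∈ Vtx E)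
    (hy : y ∈ Vtx E) (hnE : ¬ E x y) (hr : 0 ≤ r) (hu : u ∈ Vtx E) (hv : v ∈ Vtx E)
    (hw : w ∈ Vtx E) :
    hatdVia E d x y r u w ≤ extHatd E d x y r u v + hatdVia E d x y r v w := by
  rw [hatdVia_comm h u w, hatdVia_comm h v w, extHatd_comm h hnE, add_comm]
  exact hatdVia_le_hatdVia_add_extHatd h hx hy hnE hr hw hv hu

lemma min_hatd_hatdVia_le_extHatd (h : IsGraphPseudometric E d) (hx : x ∈ Vtx E)
    (hy : y ∈ Vtx E) (hnE : ¬ E x y) (hr : 0 ≤ r) (hu : u ∈ Vtx E) (hv : v ∈ Vtx E) :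
    min (hatd E d u v) (hatdVia E d x y r u v) ≤ extHatd E d x y r u v := by
  let g : X → ℝ := fun w => min (hatd E d u w) (hatdVia E d x y r u w)
  have edge_le ⦃a b : X⦄ (hab : extEdge E x y a b) : g b ≤ g a + extWt d x y r a b := by
    have via_le := hatdVia_le_add_extWt h hx hy hnE hr hu hab
    simp only [g, ← min_add_add_right]
    rcases hab with hab | hab
    · obtain ⟨ha, hb⟩ := h.mem_vtx hab
      refine min_le_min ?_ via_le
      rw [extWt_of_edge h hnE hab, h.edge_eq hab]
      exact h.hatd_triangle hu ha hb
    · refine (min_le_right _ _).trans (le_min ?_ via_le)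
      rw [extWt_of_new_edge hab]
      exact hatdVia_le_hatd_add_of_new_edge h.nonneg hab u
  calc g v ≤ g u + extHatd E d x y r u v := le_add_hatd_of_edge_le edge_le (joined_extEdge h hu hv)
    _ ≤ 0 + extHatd E d x y r u v :=
      add_le_add_left ((min_le_left _ _).trans_eq (hatd_self h.nonneg u)) _
    _ = extHatd E d x y r u v := zero_add _

lemma extWt_le_extHatd (h : IsGraphPseudometric E d) (hx : x ∈ Vtx E) (hy : y ∈ Vtx E)
    (hnE : ¬ E x y) (hr₁ : checkd E d x y ≤ r) (hr₂ : r ≤ hatd E d x y)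
    (hab : extEdge E x y a b) : extWt d x y r a b ≤ extHatd E d x y r a b := by
  have hr : 0 ≤ r := (h.checkd_nonneg hx hy).trans hr₁
  rcases hab with hab | hab
  · obtain ⟨ha, hb⟩ := h.mem_vtx hab
    rw [extWt_of_edge h hnE hab]
    refine le_trans (le_min (h.edge_eq hab).le ?_)
      (min_hatd_hatdVia_le_extHatd h hx hy hnE hr ha hb)
    linarith [edge_add_le_hatdVia h hx hy hr hab]
  · have le_min_xy : r ≤ extHatd E d x y r x y :=
      (le_min hr₂ (le_hatdVia h.nonneg hr x y)).trans
        (min_hatd_hatdVia_le_extHatd h hx hy hnE hr hx hy)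
    rw [extWt_of_new_edge hab]
    rcases hab with ⟨rfl, rfl⟩ | ⟨rfl, rfl⟩
    exacts [le_min_xy, le_min_xy.trans_eq (extHatd_comm h hnE _ _)]

lemma IsGraphPseudometric.extend (h : IsGraphPseudometric E d) (hx : x ∈ Vtx E) (hy : y ∈ Vtx E)
    (hxy : x ≠ y) (hnE : ¬ E x y) (hr₁ : checkd E d x y ≤ r) (hr₂ : r ≤ hatd E d x y) :
    IsGraphPseudometric (extEdge E x y) (extWt d x y r) where
  symm := extEdge_symm h.symm
  irrefl := by
    rintro a (ha | ⟨rfl, rfl⟩ | ⟨rfl, rfl⟩)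
    exacts [h.irrefl a ha, hxy rfl, hxy rfl]
  wt_symm := extWt_symm h hnE
  nonneg := extWt_nonneg h hnE ((h.checkd_nonneg hx hy).trans hr₁)
  connected := by
    rw [vtx_extEdge hx hy]
    exact fun u hu v hv => joined_extEdge h hu hv
  edge_eq _ _ hab := (extWt_le_extHatd h hx hy hnE hr₁ hr₂ hab).antisymm
    (hatd_le_of_edge (extWt_nonneg h hnE ((h.checkd_nonneg hx hy).trans hr₁)) hab)

lemma IsGraphMetric.extend (hd : IsGraphMetric E d) (hx : x ∈ Vtx E) (hy : y ∈ Vtx E)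
    (hxy : x ≠ y) (hnE : ¬ E x y) (hr : 0 < r) (hr₁ : checkd E d x y ≤ r)
    (hr₂ : r ≤ hatd E d x y) : IsGraphMetric (extEdge E x y) (extWt d x y r) :=
  ⟨hd.1.extend hx hy hxy hnE hr₁ hr₂, fun _ _ => extWt_pos hd hnE hr⟩

lemma FloppyMetric.extHatd_pos (hd : FloppyMetric E d) (hx : x ∈ Vtx E) (hy : y ∈ Vtx E)
    (hnE : ¬ E x y) (hr : 0 < r) (hu : u ∈ Vtx E) (hv : v ∈ Vtx E) (huv : u ≠ v) :
    0 < extHatd E d x y r u v :=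
  (lt_min (hd.hatd_pos hu hv huv) (hr.trans_le (le_hatdVia hd.1.1.nonneg hr.le u v))).trans_le
    (min_hatd_hatdVia_le_extHatd hd.1.1 hx hy hnE hr.le hu hv)

lemma min_hatd_detour_hatdVia_le_extHatd_detour (h : IsGraphPseudometric E d) (hx : x ∈ Vtx E)
    (hy : y ∈ Vtx E) (hnE : ¬ E x y) (hr : 0 ≤ r) (ha : a ∈ Vtx E) (hu : u ∈ Vtx E)
    (hv : v ∈ Vtx E) (hb : b ∈ Vtx E) :
    min (hatd E d a u + hatd E d u v + hatd E d v b) (hatdVia E d x y r a b) ≤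
      extHatd E d x y r a u + extHatd E d x y r u v + extHatd E d x y r v b := by
  have leg {p q : X} (hp : p ∈ Vtx E) (hq : q ∈ Vtx E) :=
    min_le_iff.mp (min_hatd_hatdVia_le_extHatd (r := r) h hx hy hnE hr hp hq)
  have via_au := hatdVia_le_hatdVia_add_extHatd (r := r) h hx hy hnE hr ha hu hv
  have via_av := hatdVia_le_hatdVia_add_extHatd (r := r) h hx hy hnE hr ha hv hb
  have via_uv := hatdVia_le_extHatd_add_hatdVia (r := r) h hx hy hnE hr ha hu hv
  have via_ub := hatdVia_le_extHatd_add_hatdVia (r := r) h hx hy hnE hr ha hu hb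
  have via_vb := hatdVia_le_extHatd_add_hatdVia (r := r) h hx hy hnE hr hu hv hb
  rw [min_le_iff]
  rcases leg ha hu with au | au
  · rcases leg hu hv with uv | uv
    · rcases leg hv hb with vb | vb
      · exact Or.inl (add_le_add_three au uv vb)
      · right; linarith
    · right; linarith
  · right; linarith

lemma min_hatd_hatdVia_le_extHatd_detour (h : IsGraphPseudometric E d) (hx : x ∈ Vtx E)
    (hy : y ∈ Vtx E) (hnE : ¬ E x y) (hr : 0 ≤ r) (ha : a ∈ Vtx E) (hu : u ∈ Vtx E)
    (hv : v ∈ Vtx E) (hb : b ∈ Vtx E) :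
    min (hatd E d a b) (min (hatdVia E d x y r u v) (r + extHatd E d x y r u v)) ≤
      extHatd E d x y r a u + extHatd E d x y r u v + extHatd E d x y r v b := by
  have leg {p q : X} (hp : p ∈ Vtx E) (hq : q ∈ Vtx E) :=
    min_le_iff.mp (min_hatd_hatdVia_le_extHatd (r := r) h hx hy hnE hr hp hq)
  have le_via := le_hatdVia (x := x) (y := y) h.nonneg hr
  have nonneg_au := extHatd_nonneg h hnE hr a u
  have nonneg_vb := extHatd_nonneg h hnE hr v b
  simp only [min_le_iff]
  rcases leg ha hu with au | au
  · rcases leg hu hv with uv | uv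
    · rcases leg hv hb with vb | vb
      · left; linarith [h.hatd_triangle ha hu hb, h.hatd_triangle hu hv hb]
      · right; right; linarith [le_via v b]
    · right; left; linarith
  · right; right; linarith [le_via a u]

lemma edge_add_le_extHatd_detour (h : IsGraphPseudometric E d) (hx : x ∈ Vtx E) (hy : y ∈ Vtx E)
    (hnE : ¬ E x y) (hr : 0 ≤ r) (hu : u ∈ Vtx E) (hv : v ∈ Vtx E) (hab : E a b) :
    d a b + min (r - checkd E d x y) (hatd E d u v - checkd E d u v) ≤
      extHatd E d x y r a u + extHatd E d x y r u v + extHatd E d x y r v b := by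
  obtain ⟨ha, hb⟩ := h.mem_vtx hab
  refine le_trans (le_min ?_ ?_)
    (min_hatd_detour_hatdVia_le_extHatd_detour h hx hy hnE hr ha hu hv hb)
  · linarith [min_le_right (r - checkd E d x y) (hatd E d u v - checkd E d u v),
      h.edge_le_hatd_add_checkd_add_hatd hu hv hab]
  · linarith [min_le_left (r - checkd E d x y) (hatd E d u v - checkd E d u v),
      edge_add_le_hatdVia h hx hy hr hab]

lemma FloppyMetric.checkd_extend_lt_extHatd (hd : FloppyMetric E d) (hx : x ∈ Vtx E)
    (hy : y ∈ Vtx E) (hnE : ¬ E x y) (hr₁ : checkd E d x y < r) (hr₂ : r < hatd E d x y)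
    (hu : u ∈ Vtx E) (hv : v ∈ Vtx E) (huv : u ≠ v) (hnuv : ¬ extEdge E x y u v) :
    checkd (extEdge E x y) (extWt d x y r) u v < extHatd E d x y r u v := by
  have h := hd.1.1
  have hr : 0 < r := (h.checkd_nonneg hx hy).trans_lt hr₁
  obtain ⟨hE, hne⟩ := not_or.mp hnuv
  have hpos := hd.extHatd_pos hx hy hnE hr hu hv huv
  set δ := min (r - checkd E d x y) (hatd E d u v - checkd E d u v)
  set m := min (hatd E d x y) (min (hatdVia E d x y r u v) (r + extHatd E d x y r u v)) with hm
  have δ_pos : 0 < δ := lt_min (sub_pos.mpr hr₁) (sub_pos.mpr (hd.2 u hu v hv huv hE))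
  have r_lt_m : r < m :=
    lt_min hr₂ (lt_min (hd.lt_hatdVia hx hy hr hu hv hne) (lt_add_of_pos_right r hpos))
  refine checkd_lt_hatd_of_edge_add_le hpos (lt_min δ_pos (sub_pos.mpr r_lt_m)) ?_
  rintro a b (hab | hab)
  · rw [extWt_of_edge h hnE hab]
    linarith [min_le_left δ (m - r), edge_add_le_extHatd_detour h hx hy hnE hr.le hu hv hab]
  · have m_le : m ≤ extHatd E d x y r a u + extHatd E d x y r u v + extHatd E d x y r v b := by
      rcases hab with ⟨rfl, rfl⟩ | ⟨rfl, rfl⟩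
      · exact min_hatd_hatdVia_le_extHatd_detour h hx hy hnE hr.le hx hu hv hy
      · rw [hm, h.hatd_comm]
        exact min_hatd_hatdVia_le_extHatd_detour h hx hy hnE hr.le hy hu hv hx
    rw [extWt_of_new_edge hab]
    linarith [min_le_right δ (m - r)]

end Extension

theorem floppy_one_step_extension_general {E : X → X → Prop} {d : X → X → ℝ}
    (hd : FloppyMetric E d) {x y : X} (hx : x ∈ Vtx E) (hy : y ∈ Vtx E) {r : ℝ}
    (hr₁ : checkd E d x y < r) (hr₂ : r < hatd E d x y) :
    FloppyMetric (extEdge E x y) (extWt d x y r) := by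
  have h := hd.1.1
  have hr : 0 < r := (h.checkd_nonneg hx hy).trans_lt hr₁
  have hnE : ¬ E x y := h.not_edge_of_checkd_lt_hatd (hr₁.trans hr₂)
  have hxy : x ≠ y := by
    rintro rfl
    exact (hr.trans hr₂).ne' (hatd_self h.nonneg x)
  refine ⟨hd.1.extend hx hy hxy hnE hr hr₁.le hr₂.le, ?_⟩
  rw [vtx_extEdge hx hy]
  exact fun u hu v hv => hd.checkd_extend_lt_extHatd hx hy hnE hr₁ hr₂ hu hv


/-- For every floppy graph metric `d`, every `xy ∈ [V]² \ E`, and every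
real `r` with `(1/3)ď(x,y) + (2/3)d̂(x,y) ≤ r < d̂(x,y)`, the function `d ∪ {⟨xy, r⟩}`
is a floppy graph metric. -/
theorem floppy_one_step_extension (E : X → X → Prop) (d : X → X → ℝ)
    (hd : FloppyMetric E d) (x y : X) (hx : x ∈ Vtx E) (hy : y ∈ Vtx E)
    (hxy : x ≠ y) (hnE : ¬ E x y) (r : ℝ)
    (hr₁ : (1 / 3) * checkd E d x y + (2 / 3) * hatd E d x y ≤ r)
    (hr₂ : r < hatd E d x y) :
    FloppyMetric (extEdge E x y) (extWt d x y r) :=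
  floppy_one_step_extension_general hd hx hy (by linarith [hd.2 x hx y hy hxy hnE]) hr₂

end GraphMetricPaper
end

section
/- Let d be a floppy graph metric with vertex set V and edge set E. Suppose the subspace [V]² \ E of the metric space ([V]², d̈) is not discrete, i.e., there exists p ∈ [V]² \ E such that for every ε > 0 there exists q ∈ [V]² \ E with q ≠ p and d̈(p,q) < ε. Then for every indexed family (F_e)_{e ∈ [V]² \ E} of subsets of ℝ each containing at least two elements, there exists a function r ∈ Π_{e ∈ [V]² \ E} F_e such that the set d ∪ r is not a full metric on V. -/
open scoped Classical

universe u

namespace GraphMetricPaper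

variable {X : Type u}

/-!
A full metric `D` extending `d` is dominated by `d̂`, hence `1`-Lipschitz for `d̈` as a function on
`[V]²`. If `s ≠ t` are two admissible values at `p`, choose a non-edge `q ≠ p` with
`d̈(p, q) < |s - t| / 2`: whatever value a selector takes at `q`, one of `s` and `t` is too far from
it to be the value at `p` of a full metric.
-/

section ShortestPath

variable {E : X → X → Prop} {d : X → X → ℝ} [PseudoMetricSpace (Vtx E)]

theorem dist_le_hatd (hdist : ∀ a b : Vtx E, E a b → dist a b ≤ d a b) {x y : Vtx E}
    (hxy : Joined E x y) : dist x y ≤ hatd E d x y := by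
  obtain ⟨n, c, h0, hn, hc⟩ := hxy
  refine le_csInf ⟨_, n, c, h0, hn, hc, rfl⟩ ?_
  rintro _ ⟨n, c, h0, hn, hc, rfl⟩
  have hvertex : ∀ i, ∃ v : Vtx E, i ≤ n → (v : X) = c i := by
    intro i
    rcases lt_or_ge i n with hi | hi
    · exact ⟨⟨c i, _, hc i hi⟩, fun _ => rfl⟩
    · exact ⟨y, fun hle => by rw [le_antisymm hle hi, hn]⟩
  choose v hv using hvertex
  have hx : v 0 = x := Subtype.ext ((hv 0 n.zero_le).trans h0)
  have hy : v n = y := Subtype.ext ((hv n le_rfl).trans hn)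
  rw [← hx, ← hy]
  refine dist_le_range_sum_of_dist_le n fun {i} hi => ?_
  rw [← hv i hi.le, ← hv (i + 1) hi]
  exact hdist _ _ (by simpa only [hv i hi.le, hv (i + 1) hi] using hc i hi)

theorem abs_dist_sub_dist_le_ddot (hconn : ∀ x ∈ Vtx E, ∀ y ∈ Vtx E, Joined E x y)
    (hdist : ∀ a b : Vtx E, E a b → dist a b ≤ d a b) (x y u v : Vtx E) :
    |dist x y - dist u v| ≤ ddot E d x y u v := by
  have hle (a b : Vtx E) : dist a b ≤ hatd E d a b := dist_le_hatd hdist (hconn a a.2 b b.2)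
  refine le_min ((dist_dist_dist_le x y u v).trans (add_le_add (hle x u) (hle y v))) ?_
  rw [dist_comm u v]
  exact (dist_dist_dist_le x y v u).trans (add_le_add (hle x v) (hle y u))

end ShortestPath

namespace IsFullMetricOn

variable {V : Set X} {D : X → X → ℝ}

/-- The metric space structure on `V` given by a full metric `D`, which, being a function on
doubletons, is extended by `0` to the diagonal. -/
noncomputable abbrev toMetricSpace (h : IsFullMetricOn V D) : MetricSpace V where
  dist x y := if x = y then 0 else D x y
  dist_self _ := if_pos rfl
  dist_comm x y := by
    rcases eq_or_ne x y with rfl | hxy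
    · rfl
    · rw [if_neg hxy, if_neg hxy.symm, h.1 x y x.2 y.2 (Subtype.coe_ne_coe.2 hxy)]
  dist_triangle x y z := by
    obtain ⟨-, hpos, htri⟩ := h
    have hnonneg (a b : V) : 0 ≤ if a = b then 0 else D a b := by
      split_ifs with hab
      · exact le_rfl
      · exact (hpos a b a.2 b.2 (Subtype.coe_ne_coe.2 hab)).le
    rcases eq_or_ne x z with rfl | hxz
    · simpa only [if_true] using add_nonneg (hnonneg x y) (hnonneg y x)
    rcases eq_or_ne x y with rfl | hxy
    · simp only [if_true, zero_add, le_refl]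
    rcases eq_or_ne y z with rfl | hyz
    · simp only [if_true, add_zero, le_refl]
    simpa only [if_neg hxz, if_neg hxy, if_neg hyz] using
      htri x y z x.2 y.2 z.2 (Subtype.coe_ne_coe.2 hxy) (Subtype.coe_ne_coe.2 hyz)
        (Subtype.coe_ne_coe.2 hxz)
  eq_of_dist_eq_zero {x y} hdist := by
    by_contra hxy
    rw [if_neg hxy] at hdist
    exact (h.2.1 x y x.2 y.2 (Subtype.coe_ne_coe.2 hxy)).ne' hdist

theorem abs_sub_le_ddot {E : X → X → Prop} {d : X → X → ℝ} (h : IsFullMetricOn (Vtx E) D)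
    (hd : IsGraphPseudometric E d) (hext : ∀ a b, E a b → D a b = d a b) {x y u v : X}
    (hx : x ∈ Vtx E) (hy : y ∈ Vtx E) (hu : u ∈ Vtx E) (hv : v ∈ Vtx E) (hxy : x ≠ y)
    (huv : u ≠ v) : |D x y - D u v| ≤ ddot E d x y u v := by
  let := h.toMetricSpace
  have dist_of_ne {a b : Vtx E} (hab : (a : X) ≠ b) : dist a b = D a b :=
    if_neg (Subtype.coe_ne_coe.1 hab)
  have hdist (a b : Vtx E) (hab : E a b) : dist a b ≤ d a b :=
    ((dist_of_ne fun heq => hd.irrefl a (by rwa [← heq] at hab)).trans (hext a b hab)).le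
  have hlip := abs_dist_sub_dist_le_ddot hd.connected hdist ⟨x, hx⟩ ⟨y, hy⟩ ⟨u, hu⟩ ⟨v, hv⟩
  rwa [dist_of_ne hxy, dist_of_ne huv] at hlip

end IsFullMetricOn

section Selector

variable {E : X → X → Prop} {F : X → X → Set ℝ}

/-- Membership `r ∈ Π_{e ∈ [V]² \ E} F_e`: functions on `[V]² \ E` are encoded as functions of two
variables that are symmetric on non-edges. -/
def IsSelector (E : X → X → Prop) (F : X → X → Set ℝ) (r : X → X → ℝ) : Prop :=
  ∀ a b, a ∈ Vtx E → b ∈ Vtx E → a ≠ b → ¬ E a b → r a b = r b a ∧ r a b ∈ F a b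

theorem exists_isSelector
    (hF : ∀ a b, a ∈ Vtx E → b ∈ Vtx E → a ≠ b → ¬ E a b → F a b = F b a ∧ (F a b).Nonempty) :
    ∃ r, IsSelector E F r := by
  refine ⟨fun a b => Classical.epsilon (· ∈ F a b), fun a b ha hb hab hE => ?_⟩
  obtain ⟨hsymm, hne⟩ := hF a b ha hb hab hE
  exact ⟨by simp only [hsymm], Classical.epsilon_spec hne⟩

theorem IsSelector.extWt {r : X → X → ℝ} (hr : IsSelector E F r) {x y : X} {v : ℝ}
    (hxy : v ∈ F x y) (hyx : v ∈ F y x) : IsSelector E F (extWt r x y v) := by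
  intro a b ha hb hab hE
  have hswap : (b = x ∧ a = y) ∨ (b = y ∧ a = x) ↔ (a = x ∧ b = y) ∨ (a = y ∧ b = x) := by tauto
  simp only [GraphMetricPaper.extWt, hswap]
  split_ifs with hpair
  · rcases hpair with ⟨rfl, rfl⟩ | ⟨rfl, rfl⟩
    exacts [⟨rfl, hxy⟩, ⟨rfl, hyx⟩]
  · exact hr a b ha hb hab hE

end Selector

theorem exists_selector_not_metric_general {E : X → X → Prop} {d : X → X → ℝ}
    (hd : IsGraphPseudometric E d) {p₁ p₂ : X}
    (hp : p₁ ∈ Vtx E ∧ p₂ ∈ Vtx E ∧ p₁ ≠ p₂ ∧ ¬ E p₁ p₂)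
    (hnondiscrete : ∀ ε : ℝ, 0 < ε → ∃ q₁ q₂ : X,
      q₁ ∈ Vtx E ∧ q₂ ∈ Vtx E ∧ q₁ ≠ q₂ ∧ ¬ E q₁ q₂ ∧
      ¬ ((q₁ = p₁ ∧ q₂ = p₂) ∨ (q₁ = p₂ ∧ q₂ = p₁)) ∧
      ddot E d p₁ p₂ q₁ q₂ < ε)
    {F : X → X → Set ℝ}
    (hF : ∀ a b, a ∈ Vtx E → b ∈ Vtx E → a ≠ b → ¬ E a b → F a b = F b a ∧ (F a b).Nonempty)
    (hFp : (F p₁ p₂).Nontrivial) :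
    ∃ r, IsSelector E F r ∧
      ¬ IsFullMetricOn (Vtx E) (fun a b => if E a b then d a b else r a b) := by
  obtain ⟨hp₁, hp₂, hpne, hpE⟩ := hp
  obtain ⟨s, hs, t, ht, hst⟩ := hFp
  obtain ⟨q₁, q₂, hq₁, hq₂, hqne, hqE, hqp, hclose⟩ :=
    hnondiscrete (dist s t / 2) (half_pos (dist_pos.2 hst))
  obtain ⟨r, hr⟩ := exists_isSelector hF
  obtain ⟨v, hv, hfar⟩ : ∃ v ∈ F p₁ p₂, dist s t / 2 ≤ dist v (r q₁ q₂) := by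
    by_contra! hnear
    linarith [hnear s hs, hnear t ht, dist_triangle_right s t (r q₁ q₂)]
  have hsymm := (hF p₁ p₂ hp₁ hp₂ hpne hpE).1
  refine ⟨extWt r p₁ p₂ v, hr.extWt hv (hsymm ▸ hv), fun hfull => ?_⟩
  have hlip := hfull.abs_sub_le_ddot hd (fun _ _ hab => if_pos hab) hp₁ hp₂ hq₁ hq₂ hpne hqne
  simp only [if_neg hpE, if_neg hqE, extWt, if_neg hqp, and_self, true_or, if_true] at hlip
  exact (hclose.trans_le hfar).not_ge hlip

/-- If `d` is a floppy graph metric such that `[V]² \ E` is not a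
discrete subspace of `([V]², d̈)`, then for every family of at least two-element sets
`F_e ⊆ ℝ` indexed by the non-edges, there is a selector `r` such that `d ∪ r` is not a
full metric on `V`. -/
theorem exists_selector_not_metric (E : X → X → Prop) (d : X → X → ℝ)
    (hd : FloppyMetric E d) (p₁ p₂ : X)
    (hp : p₁ ∈ Vtx E ∧ p₂ ∈ Vtx E ∧ p₁ ≠ p₂ ∧ ¬ E p₁ p₂)
    (hnondiscrete : ∀ ε : ℝ, 0 < ε → ∃ q₁ q₂ : X,
      q₁ ∈ Vtx E ∧ q₂ ∈ Vtx E ∧ q₁ ≠ q₂ ∧ ¬ E q₁ q₂ ∧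
      ¬ ((q₁ = p₁ ∧ q₂ = p₂) ∨ (q₁ = p₂ ∧ q₂ = p₁)) ∧
      ddot E d p₁ p₂ q₁ q₂ < ε)
    (F : X → X → Set ℝ)
    (hF : ∀ a b, a ∈ Vtx E → b ∈ Vtx E → a ≠ b → ¬ E a b →
      F a b = F b a ∧ ∃ s t : ℝ, s ∈ F a b ∧ t ∈ F a b ∧ s ≠ t) :
    ∃ r : X → X → ℝ,
      (∀ a b, a ∈ Vtx E → b ∈ Vtx E → a ≠ b → ¬ E a b →
        r a b = r b a ∧ r a b ∈ F a b) ∧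
      ¬ IsFullMetricOn (Vtx E) (fun a b => if E a b then d a b else r a b) := by
  obtain ⟨-, s, t, hs, ht, hst⟩ := hF p₁ p₂ hp.1 hp.2.1 hp.2.2.1 hp.2.2.2
  exact exists_selector_not_metric_general hd.1.1 hp hnondiscrete
    (fun a b ha hb hab hE => (hF a b ha hb hab hE).imp_right fun ⟨u, _, hu, _⟩ => ⟨u, hu⟩)
    ⟨s, hs, t, ht, hst⟩

end GraphMetricPaper
end

section
/- Let d be a graph metric with vertex set V and edge set E such that the metric space ([V]², d̈) contains a separable uncountable subspace S ⊆ [V]² \ E (i.e., S is uncountable and there is a countable A ⊆ S such that for every s ∈ S and ε > 0 there exists a ∈ A with d̈(a,s) < ε). Then for every ordinal λ and every family 𝔉 of subsets of ℝ each containing at least two elements, player II has a winning strategy in the metric-extending game Game_d(λ,𝔉). -/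
open scoped Classical

universe u

namespace GraphMetricPaper

variable {X : Type u}

/-!
A full metric `D` extending `d` is dominated by `d̂`, hence it is 1-Lipschitz, and in particular
continuous, with respect to `d̈`. Whenever player I plays a pair lying in the `d̈`-closure of the
pairs played before, continuity prescribes the value of `D` there as a limit of the earlier answers,
and player II chooses a different element of the offered set. If player I nevertheless won, then no
played pair would lie in the `d̈`-closure of its predecessors. In a second countable space a
linearly ordered family with this property is countable, but every pair in `S` has to be played.
-/

section

open Set Filter Topology

theorem countable_range_of_notMem_closure {α ι : Type*} [TopologicalSpace α]
    [SecondCountableTopology α] [LinearOrder ι] {g : α → ι}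
    (hg : ∀ x, x ∉ closure {y | g y < g x}) : (range g).Countable := by
  have hbasis : ∀ x, ∃ b : TopologicalSpace.countableBasis α, x ∈ b.1 ∧ ∀ y ∈ b.1, g x ≤ g y := by
    intro x
    obtain ⟨b, hb, hxb, hbg⟩ := (TopologicalSpace.isBasis_countableBasis α).mem_nhds_iff.1
      (isClosed_closure.isOpen_compl.mem_nhds (hg x))
    exact ⟨⟨b, hb⟩, hxb, fun y hy => not_lt.1 fun hlt => hbg hy (subset_closure hlt)⟩
  choose b hxb hmin using hbasis
  have hinj : Function.Injective fun i : range g => b (rangeSplitting g i) := by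
    intro i j (hij : b _ = b _)
    apply Subtype.ext
    rw [← apply_rangeSplitting g i, ← apply_rangeSplitting g j]
    exact le_antisymm (hmin _ _ (hij ▸ hxb _)) (hmin _ _ (hij ▸ hxb _))
  exact countable_coe_iff.1 hinj.countable

theorem limUnder_comap_nhds_zero {ι M : Type*} [MetricSpace M] [Nonempty M] {f : ι → M} {c : M}
    {δ : ι → ℝ} (hf : ∀ i, dist (f i) c ≤ δ i) (hδ : ∀ ε > 0, ∃ i, δ i < ε) :
    limUnder (comap δ (𝓝 0)) f = c := by
  have : NeBot (comap δ (𝓝 0)) := by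
    refine (Metric.nhds_basis_ball.comap δ).neBot_iff.2 fun {ε} hε => ?_
    obtain ⟨i, hi⟩ := hδ ε hε
    refine ⟨i, ?_⟩
    rw [mem_preimage, mem_ball_zero_iff, Real.norm_of_nonneg (dist_nonneg.trans (hf i))]
    exact hi
  exact Tendsto.limUnder_eq
    (tendsto_iff_dist_tendsto_zero.2 (squeeze_zero (fun _ => dist_nonneg) hf tendsto_comap))

variable {E : X → X → Prop} {d : X → X → ℝ}

/-- `s` is the weight of a walk from `x` to `y`: the set `walkSums E d x y` as an inductive
predicate, so that walks can be treated by structural induction. -/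
inductive IsWalkWeight (E : X → X → Prop) (d : X → X → ℝ) : X → X → ℝ → Prop
  | nil (x : X) : IsWalkWeight E d x x 0
  | cons {x y z : X} {s : ℝ} (hxy : E x y) (hs : IsWalkWeight E d y z s) :
      IsWalkWeight E d x z (d x y + s)

theorem mem_walkSums_iff {x y : X} {s : ℝ} :
    s ∈ walkSums E d x y ↔ IsWalkWeight E d x y s := by
  constructor
  · rintro ⟨n, c, rfl, rfl, hc, rfl⟩
    induction n generalizing c with
    | zero => exact .nil _
    | succ n ih =>
      rw [Finset.sum_range_succ', add_comm (Finset.sum _ _)]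
      exact .cons (hc 0 n.succ_pos) (ih (fun i => c (i + 1)) fun i hi => hc (i + 1) (by lia))
  · intro hs
    induction hs with
    | nil x => exact ⟨0, fun _ => x, rfl, rfl, by simp, by simp⟩
    | @cons x y z s hxy _ ih =>
      obtain ⟨n, c, rfl, rfl, hc, rfl⟩ := ih
      refine ⟨n + 1, fun i => Nat.casesOn i x c, rfl, rfl, ?_, ?_⟩
      · rintro (_ | i) hi
        · exact hxy
        · exact hc i (by lia)
      · rw [Finset.sum_range_succ']
        exact add_comm _ _

namespace IsWalkWeight

variable {x y z : X} {s t : ℝ}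

theorem append (hs : IsWalkWeight E d x y s) (ht : IsWalkWeight E d y z t) :
    IsWalkWeight E d x z (s + t) := by
  induction hs with
  | nil x => rwa [zero_add]
  | cons hxy _ ih => rw [add_assoc]; exact .cons hxy (ih ht)

theorem reverse (hd : IsGraphPseudometric E d) (hs : IsWalkWeight E d x y s) :
    IsWalkWeight E d y x s := by
  induction hs with
  | nil x => exact .nil x
  | @cons x y z s hxy _ ih =>
    have hyx := IsWalkWeight.cons (d := d) (hd.symm hxy) (.nil x)
    rw [add_zero, ← hd.wt_symm hxy] at hyx
    rw [add_comm]
    exact ih.append hyx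

theorem nonneg (hd : IsGraphPseudometric E d) (hs : IsWalkWeight E d x y s) : 0 ≤ s := by
  induction hs with
  | nil => exact le_rfl
  | cons hxy _ ih => exact add_nonneg (hd.nonneg hxy) ih

end IsWalkWeight

namespace IsGraphPseudometric

variable (hd : IsGraphPseudometric E d)
include hd

theorem hatd_le {x y : X} {s : ℝ} (hs : IsWalkWeight E d x y s) : hatd E d x y ≤ s :=
  csInf_le ⟨0, fun _ ht => (mem_walkSums_iff.1 ht).nonneg hd⟩ (mem_walkSums_iff.2 hs)

theorem le_hatd {x y : X} {r : ℝ} (hx : x ∈ Vtx E) (hy : y ∈ Vtx E)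
    (h : ∀ s, IsWalkWeight E d x y s → r ≤ s) : r ≤ hatd E d x y := by
  obtain ⟨n, c, h₀, hn, hc⟩ := hd.connected x hx y hy
  exact le_csInf ⟨_, n, c, h₀, hn, hc, rfl⟩ fun s hs => h s (mem_walkSums_iff.1 hs)

theorem hatd_nonneg (x y : X) : 0 ≤ hatd E d x y :=
  Real.sInf_nonneg fun _ hs => (mem_walkSums_iff.1 hs).nonneg hd

theorem hatd_self (x : X) : hatd E d x x = 0 :=
  le_antisymm (hd.hatd_le (.nil x)) (hd.hatd_nonneg x x)

theorem hatd_comm_s3 (x y : X) : hatd E d x y = hatd E d y x := by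
  unfold hatd
  congr 1
  ext s
  simp only [mem_walkSums_iff]
  exact ⟨.reverse hd, .reverse hd⟩

theorem hatd_triangle_s3 {x y z : X} (hx : x ∈ Vtx E) (hy : y ∈ Vtx E) (hz : z ∈ Vtx E) :
    hatd E d x z ≤ hatd E d x y + hatd E d y z := by
  rw [← sub_le_iff_le_add]
  refine hd.le_hatd hx hy fun s hs => ?_
  rw [sub_le_comm]
  refine hd.le_hatd hy hz fun t ht => ?_
  rw [sub_le_iff_le_add']
  exact hd.hatd_le (hs.append ht)

theorem dist_le_hatd [PseudoMetricSpace (Vtx E)]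
    (hdist : ∀ x y : Vtx E, E x y → dist x y ≤ d x y) (x y : Vtx E) :
    dist x y ≤ hatd E d x y := by
  have hwalk : ∀ {a b : X} {s : ℝ}, IsWalkWeight E d a b s →
      ∀ (ha : a ∈ Vtx E) (hb : b ∈ Vtx E), dist (⟨a, ha⟩ : Vtx E) ⟨b, hb⟩ ≤ s := by
    intro a b s hs ha hb
    induction hs with
    | nil a => exact (dist_self _).le
    | @cons a c b s hac _ ih =>
      have hc : c ∈ Vtx E := ⟨a, hd.symm hac⟩
      calc dist (⟨a, ha⟩ : Vtx E) ⟨b, hb⟩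
          ≤ dist (⟨a, ha⟩ : Vtx E) ⟨c, hc⟩ + dist (⟨c, hc⟩ : Vtx E) ⟨b, hb⟩ := dist_triangle _ _ _
        _ ≤ d a c + s := add_le_add (hdist _ _ hac) (ih hc hb)
  exact hd.le_hatd x.2 y.2 fun s hs => hwalk hs x.2 y.2

end IsGraphPseudometric

theorem ddot_congr {x y x' y' u v u' v' : X} (hx : s(x, y) = s(x', y')) (hu : s(u, v) = s(u', v')) :
    ddot E d x y u v = ddot E d x' y' u' v' := by
  unfold ddot
  rcases Sym2.eq_iff.1 hx with ⟨rfl, rfl⟩ | ⟨rfl, rfl⟩ <;>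
    rcases Sym2.eq_iff.1 hu with ⟨rfl, rfl⟩ | ⟨rfl, rfl⟩ <;>
    grind

namespace IsGraphPseudometric

theorem ddot_self (hd : IsGraphPseudometric E d) (x y : X) : ddot E d x y x y = 0 := by
  rw [ddot, hd.hatd_self, hd.hatd_self, add_zero]
  exact min_eq_left (add_nonneg (hd.hatd_nonneg x y) (hd.hatd_nonneg y x))

theorem ddot_comm (hd : IsGraphPseudometric E d) (x y u v : X) :
    ddot E d x y u v = ddot E d u v x y := by
  rw [ddot, ddot, hd.hatd_comm_s3 x u, hd.hatd_comm_s3 y v, hd.hatd_comm_s3 x v, hd.hatd_comm_s3 y u,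
    add_comm (hatd E d v x)]

theorem ddot_triangle (hd : IsGraphPseudometric E d) {x y u v w z : X} (hx : x ∈ Vtx E)
    (hy : y ∈ Vtx E) (hu : u ∈ Vtx E) (hv : v ∈ Vtx E) (hw : w ∈ Vtx E) (hz : z ∈ Vtx E) :
    ddot E d x y w z ≤ ddot E d x y u v + ddot E d u v w z := by
  have hle_direct : ddot E d x y w z ≤ hatd E d x w + hatd E d y z := min_le_left _ _
  have hle_cross : ddot E d x y w z ≤ hatd E d x z + hatd E d y w := min_le_right _ _
  rcases min_choice (hatd E d x u + hatd E d y v) (hatd E d x v + hatd E d y u) with h | h <;>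
    rcases min_choice (hatd E d u w + hatd E d v z) (hatd E d u z + hatd E d v w) with h' | h' <;>
    rw [ddot.eq_def E d x y u v, ddot.eq_def E d u v w z, h, h']
  · linarith [hd.hatd_triangle_s3 hx hu hw, hd.hatd_triangle_s3 hy hv hz]
  · linarith [hd.hatd_triangle_s3 hx hu hz, hd.hatd_triangle_s3 hy hv hw]
  · linarith [hd.hatd_triangle_s3 hx hv hz, hd.hatd_triangle_s3 hy hu hw]
  · linarith [hd.hatd_triangle_s3 hx hv hw, hd.hatd_triangle_s3 hy hu hz]

/-- The pseudometric `d̈` on a set of ordered pairs of vertices. A pair is at distance `0` from its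
swap, so this is the topology pulled back from unordered pairs. -/
noncomputable abbrev ddotPseudoMetricSpace (hd : IsGraphPseudometric E d) {S : Set (X × X)}
    (hS : S ⊆ Vtx E ×ˢ Vtx E) : PseudoMetricSpace S where
  dist p q := ddot E d p.1.1 p.1.2 q.1.1 q.1.2
  dist_self p := hd.ddot_self p.1.1 p.1.2
  dist_comm p q := hd.ddot_comm p.1.1 p.1.2 q.1.1 q.1.2
  dist_triangle p q r :=
    hd.ddot_triangle (hS p.2).1 (hS p.2).2 (hS q.2).1 (hS q.2).2 (hS r.2).1 (hS r.2).2

theorem countable_of_forall_exists_le_ddot (hd : IsGraphPseudometric E d) {S A : Set (X × X)}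
    (hS : S ⊆ Vtx E ×ˢ Vtx E) (hAS : A ⊆ S) (hA : A.Countable)
    (hdense : ∀ q ∈ S, ∀ ε : ℝ, 0 < ε → ∃ a ∈ A, ddot E d a.1 a.2 q.1 q.2 < ε)
    {ι : Type*} [LinearOrder ι] {P : ι → X × X}
    (hcover : ∀ q ∈ S, ∃ i, s(q.1, q.2) = s((P i).1, (P i).2))
    (hsep : ∀ j, ∃ ε > 0, ∀ i < j, ε ≤ ddot E d (P i).1 (P i).2 (P j).1 (P j).2) :
    S.Countable := by
  choose i hi using fun q : S => hcover q q.2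
  let _ : PseudoMetricSpace S := hd.ddotPseudoMetricSpace hS
  have hdense' : Dense (Subtype.val ⁻¹' A : Set S) := by
    refine fun q => Metric.mem_closure_iff.2 fun ε hε => ?_
    obtain ⟨a, ha, haq⟩ := hdense q q.2 ε hε
    exact ⟨⟨a, hAS ha⟩, ha, by rwa [dist_comm]⟩
  have : TopologicalSpace.SeparableSpace S :=
    ⟨_, hA.preimage Subtype.val_injective, hdense'⟩
  have : SecondCountableTopology S := UniformSpace.secondCountable_of_separable S
  have hi_countable : (range i).Countable := by
    refine countable_range_of_notMem_closure fun q hq => ?_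
    obtain ⟨ε, hε, hle⟩ := hsep (i q)
    obtain ⟨q', hq'lt, hq'ε⟩ := Metric.mem_closure_iff.1 hq ε hε
    rw [dist_comm] at hq'ε
    exact (hle _ hq'lt).not_gt ((ddot_congr (hi q') (hi q)).symm.trans_lt hq'ε)
  have hpairs_countable : (⋃ j ∈ range i, {P j, (P j).swap}).Countable :=
    hi_countable.biUnion fun j _ => (toFinite _).countable
  refine hpairs_countable.mono fun q hq => ?_
  exact mem_biUnion (mem_range_self ⟨q, hq⟩)
    ((Sym2.eq_iff.1 (hi ⟨q, hq⟩)).imp (fun h => Prod.ext h.1 h.2) fun h => Prod.ext h.1 h.2)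

end IsGraphPseudometric

namespace IsFullMetricRel

variable {V : Set X} {R : X → X → ℝ → Prop}

theorem sInf_eq (h : IsFullMetricRel V R) {x y : X} {r : ℝ} (hr : R x y r) :
    sInf {s | R x y s} = r := by
  obtain ⟨-, -, -, huniq, -⟩ := h
  have hsingleton : {s | R x y s} = {r} :=
    eq_singleton_iff_unique_mem.2 ⟨hr, fun s hs => huniq x y s r hs hr⟩
  rw [hsingleton, csInf_singleton]

theorem sInf_self (h : IsFullMetricRel V R) (x : X) : sInf {s | R x x s} = 0 := by
  obtain ⟨-, hdom, -⟩ := h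
  have hempty : {s | R x x s} = ∅ :=
    eq_empty_of_forall_notMem fun s hs => (hdom x x s hs).2.2 rfl
  rw [hempty, Real.sInf_empty]

theorem sInf_comm (h : IsFullMetricRel V R) (x y : X) :
    sInf {s | R x y s} = sInf {s | R y x s} :=
  congrArg sInf (Set.ext fun s => ⟨h.1 x y s, h.1 y x s⟩)

theorem sInf_triangle (h : IsFullMetricRel V R) {x y z : X} (hx : x ∈ V) (hy : y ∈ V)
    (hz : z ∈ V) : sInf {s | R x z s} ≤ sInf {s | R x y s} + sInf {s | R y z s} := by
  have ⟨_, _, htotal, _, hpos, htri⟩ := h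
  rcases eq_or_ne x y with rfl | hxy
  · rw [h.sInf_self, zero_add]
  rcases eq_or_ne y z with rfl | hyz
  · rw [h.sInf_self, add_zero]
  obtain ⟨r, hr⟩ := htotal x y hx hy hxy
  obtain ⟨s, hs⟩ := htotal y z hy hz hyz
  rw [h.sInf_eq hr, h.sInf_eq hs]
  rcases eq_or_ne x z with rfl | hxz
  · rw [h.sInf_self]
    exact (add_pos (hpos _ _ _ hr) (hpos _ _ _ hs)).le
  · obtain ⟨t, ht⟩ := htotal x z hx hz hxz
    rw [h.sInf_eq ht]
    exact htri x y z r s t hr hs ht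

theorem eq_of_sInf_eq_zero (h : IsFullMetricRel V R) {x y : X} (hx : x ∈ V) (hy : y ∈ V)
    (h₀ : sInf {s | R x y s} = 0) : x = y := by
  have ⟨_, _, htotal, _, hpos, _⟩ := h
  by_contra hxy
  obtain ⟨r, hr⟩ := htotal x y hx hy hxy
  exact (hpos x y r hr).ne' ((h.sInf_eq hr).symm.trans h₀)

/-- The metric on `V` given by the full metric `R`. On the diagonal, where `R` is empty, the value
is `sInf ∅ = 0`. -/
noncomputable abbrev metricSpace (h : IsFullMetricRel V R) : MetricSpace V where
  dist x y := sInf {r | R x y r}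
  dist_self x := h.sInf_self x
  dist_comm x y := h.sInf_comm x y
  dist_triangle x y z := h.sInf_triangle x.2 y.2 z.2
  eq_of_dist_eq_zero {x y} h₀ := Subtype.ext (h.eq_of_sInf_eq_zero x.2 y.2 h₀)

theorem abs_sub_le_ddot (hd : IsGraphPseudometric E d) (h : IsFullMetricRel (Vtx E) R)
    (hR : ∀ a b, E a b → R a b (d a b)) {x y u v : X} {r s : ℝ} (hxy : R x y r) (huv : R u v s) :
    |r - s| ≤ ddot E d x y u v := by
  have ⟨_, hdom, _⟩ := h
  let _ : MetricSpace (Vtx E) := h.metricSpace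
  have hle : ∀ a b : Vtx E, dist a b ≤ hatd E d a b :=
    hd.dist_le_hatd fun a b hab => (h.sInf_eq (hR a b hab)).le
  let x' : Vtx E := ⟨x, (hdom x y r hxy).1⟩
  let y' : Vtx E := ⟨y, (hdom x y r hxy).2.1⟩
  let u' : Vtx E := ⟨u, (hdom u v s huv).1⟩
  let v' : Vtx E := ⟨v, (hdom u v s huv).2.1⟩
  have hr : dist x' y' = r := h.sInf_eq hxy
  have hs : dist u' v' = s := h.sInf_eq huv
  rw [← hr, ← hs, ← Real.dist_eq]
  refine le_min ((dist_dist_dist_le x' y' u' v').trans (add_le_add (hle x' u') (hle y' v'))) ?_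
  rw [dist_comm u' v']
  exact (dist_dist_dist_le x' y' v' u').trans (add_le_add (hle x' v') (hle y' u'))

end IsFullMetricRel

/-- The moves of player I up to and including inning `β`. -/
abbrev Moves (X : Type u) (β : Ordinal.{u}) : Type (u + 1) :=
  ∀ α : Ordinal.{u}, α ≤ β → (X × X) × Set ℝ

/-- The initial segment of a sequence of moves that ends with inning `α`. -/
abbrev Moves.restrict {α β : Ordinal.{u}} (p : Moves X β) (hα : α ≤ β) : Moves X α :=
  fun γ hγ => p γ (hγ.trans hα)

theorem exists_strategy_mem_and_ne (v : ∀ β : Ordinal.{u}, Moves X β → (Iio β → ℝ) → ℝ) :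
    ∃ T : ∀ β, Moves X β → ℝ, ∀ β (p : Moves X β), (p β le_rfl).2.Nontrivial →
      T β p ∈ (p β le_rfl).2 ∧ T β p ≠ v β p fun α => T α (p.restrict α.2.le) := by
  let answer (β : Ordinal.{u}) (ih : ∀ α < β, Moves X α → ℝ) (p : Moves X β) : ℝ :=
    Classical.epsilon fun r =>
      r ∈ (p β le_rfl).2 ∧ r ≠ v β p fun α => ih α α.2 (p.restrict α.2.le)
  refine ⟨WellFounded.fix wellFounded_lt answer, fun β p hp => ?_⟩
  rw [WellFounded.fix_eq]
  exact Classical.epsilon_spec (hp.exists_ne _)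

/-- The value that `d̈`-continuity prescribes for the pair played at inning `β`: the limit of the
earlier answers `s` along the pairs `d̈`-converging to it. This is a junk value if that pair is not
in the `d̈`-closure of its predecessors. -/
noncomputable def forcedValue (E : X → X → Prop) (d : X → X → ℝ) (β : Ordinal.{u}) (p : Moves X β)
    (s : Iio β → ℝ) : ℝ :=
  limUnder (comap (fun α : Iio β => ddot E d (p α α.2.le).1.1 (p α α.2.le).1.2
    (p β le_rfl).1.1 (p β le_rfl).1.2) (𝓝 0)) s

theorem IsFullMetricRel.forcedValue_eq {R : X → X → ℝ → Prop} (hd : IsGraphPseudometric E d)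
    (h : IsFullMetricRel (Vtx E) R) (hR : ∀ a b, E a b → R a b (d a b)) {β : Ordinal.{u}}
    {p : Moves X β} {s : Iio β → ℝ} {r : ℝ}
    (hs : ∀ α : Iio β, R (p α α.2.le).1.1 (p α α.2.le).1.2 (s α))
    (hr : R (p β le_rfl).1.1 (p β le_rfl).1.2 r)
    (hclose : ∀ ε > 0, ∃ α : Iio β, ddot E d (p α α.2.le).1.1 (p α α.2.le).1.2
      (p β le_rfl).1.1 (p β le_rfl).1.2 < ε) :
    forcedValue E d β p s = r :=
  limUnder_comap_nhds_zero (fun α => h.abs_sub_le_ddot hd hR (hs α) hr) hclose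

end

/-- If `d` is a graph metric such that the metric space `([V]², d̈)`
contains a separable uncountable subspace `S ⊆ [V]² \ E`, then for every ordinal `λ`
and every family `𝔉` of at least two-element subsets of `ℝ`, player II has a winning
strategy in the metric-extending game `Game_d(λ, 𝔉)`. -/
theorem playerII_winning_strategy (E : X → X → Prop) (d : X → X → ℝ)
    (hd : IsGraphMetric E d) (S : Set (X × X))
    (hS : ∀ q ∈ S, q.1 ∈ Vtx E ∧ q.2 ∈ Vtx E ∧ q.1 ≠ q.2 ∧ ¬ E q.1 q.2)
    (huncount : ¬ S.Countable)
    (hsep : ∃ A ⊆ S, A.Countable ∧ ∀ q ∈ S, ∀ ε : ℝ, 0 < ε →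
      ∃ a ∈ A, ddot E d a.1 a.2 q.1 q.2 < ε)
    (lam : Ordinal.{u}) (Fam : Set (Set ℝ))
    (hFam : ∀ G ∈ Fam, ∃ s t : ℝ, s ∈ G ∧ t ∈ G ∧ s ≠ t) :
    WinningStratII (Vtx E) E d lam Fam := by
  obtain ⟨A, hAS, hA, hdense⟩ := hsep
  have hnontrivial : ∀ G ∈ Fam, G.Nontrivial := fun G hG =>
    let ⟨s, t, hs, ht, hst⟩ := hFam G hG
    ⟨s, hs, t, ht, hst⟩
  obtain ⟨T, hT⟩ := exists_strategy_mem_and_ne (forcedValue E d)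
  refine ⟨fun β _ p => T β p, fun β _ p hp => (hT β p (hnontrivial _ hp)).1,
    fun p hp hfull => ?_⟩
  have hplayed : ∀ q ∈ S, ∃ α : Set.Iio lam, s(q.1, q.2) = s((p α α.2).1.1, (p α α.2).1.2) := by
    intro q hq
    obtain ⟨hq₁, hq₂, hne, hnE⟩ := hS q hq
    obtain ⟨r, ⟨hE, -⟩ | ⟨α, hα, hqα, -⟩⟩ := hfull.2.2.1 q.1 q.2 hq₁ hq₂ hne
    · exact absurd hE hnE
    · exact ⟨⟨α, hα⟩, Sym2.eq_iff.2 hqα⟩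
  have hseparated : ∀ β : Set.Iio lam, ∃ ε > 0, ∀ α < β,
      ε ≤ ddot E d (p α α.2).1.1 (p α α.2).1.2 (p β β.2).1.1 (p β β.2).1.2 := by
    rintro ⟨β, hβ⟩
    by_contra! hclose
    refine (hT β (fun γ hγ => p γ (hγ.trans_lt hβ)) (hnontrivial _ (hp β hβ).2.2.2)).2
      (hfull.forcedValue_eq hd.1 (fun a b hab => .inl ⟨hab, rfl⟩)
        (fun α => .inr ⟨α, α.2.trans hβ, .inl ⟨rfl, rfl⟩, rfl⟩)
        (.inr ⟨β, hβ, .inl ⟨rfl, rfl⟩, rfl⟩) fun ε hε => ?_).symm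
    obtain ⟨α, hαβ, hαε⟩ := hclose ε hε
    exact ⟨⟨α, hαβ⟩, hαε⟩
  exact huncount (hd.1.countable_of_forall_exists_le_ddot
    (fun q hq => ⟨(hS q hq).1, (hS q hq).2.1⟩) hAS hA hdense hplayed hseparated)

end GraphMetricPaper
end
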